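/- Let n ≥ 3 and X = {x ∈ ℝⁿ : ‖x‖ = 1, ⟨x,e₁⟩ ≥ 0} ∪ {−e₁}. Let A be any deterministic learning algorithm (a hard-margin SVM) that, on every input multiset S containing examples of both labels that is linearly separable, outputs a linear classifier x ↦ 1[⟨ŵ,x⟩ + b̂ ≥ 0] consistent with S that maximizes, among all linear classifiers consistent with S, the minimum Euclidean distance from the instances of S to the decision hyperplane. Then for every ε ∈ (0, 1/16) there exist a linear target h* = (x ↦ 1[⟨w*,x⟩ + b* ≥ 0]) and a distribution D over D_{h*} with margin γ = 1/8 such that E_{S_trn~D^m}[ atk_D(1, h*, S_trn, A) ] > ε whenever m < max( e^{n/128}/(768ε), 1/(8ε) ). -/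

import Mathlib

open MeasureTheory ENNReal RealInnerProductSpace

/-- The multiset of training examples determined by a tuple of i.i.d. draws. -/
def toTrain {α : Type*} {m : ℕ} (f : Fin m → α) : Multiset α := ↑(List.ofFn f)

/-- The distribution of `m` i.i.d. draws from `D`. -/
noncomputable def samples {α : Type*} [MeasurableSpace α] (D : Measure α) (m : ℕ) :
    Measure (Fin m → α) := Measure.pi fun _ => D

/-- The `t`-point clean-label attackable rate of a deterministic learner. -/
noncomputable def atkDetT {X : Type*} [MeasurableSpace X] (t : ℕ) (D : Measure (X × Bool))
    (h : X → Bool) (S : Multiset (X × Bool)) (A : Multiset (X × Bool) → X → Bool) : ℝ≥0∞ :=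
  ⨆ Adv : {f : X → Multiset (X × Bool) //
      ∀ x : X, (∀ p ∈ f x, p.2 = h p.1) ∧ (f x).card ≤ t},
    D {p : X × Bool | A (S + Adv.1 p.1) p.1 ≠ h p.1}

/-- The (topological) support of a measure. -/
def msupport {α : Type*} [TopologicalSpace α] [MeasurableSpace α] (D : Measure α) : Set α :=
  {p | ∀ U : Set α, IsOpen U → p ∈ U → 0 < D U}

/-- The first standard basis vector of `ℝⁿ`. -/
noncomputable def e₁ (n : ℕ) (hn : 3 ≤ n) : EuclideanSpace ℝ (Fin n) :=
  EuclideanSpace.single ⟨0, by omega⟩ 1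

/-- The instance space `{x : ‖x‖ = 1, ⟨x,e₁⟩ ≥ 0} ∪ {-e₁}`. -/
abbrev HalfSphere (n : ℕ) (hn : 3 ≤ n) : Type :=
  {x : EuclideanSpace ℝ (Fin n) // (‖x‖ = 1 ∧ 0 ≤ ⟪x, e₁ n hn⟫) ∨ x = -(e₁ n hn)}

/-- number of agreements -/
def agr {k : ℕ} (u v : Fin k → Bool) : ℕ := (Finset.univ.filter fun i => u i = v i).card

lemma agr_comm' {k : ℕ} (u v : Fin k → Bool) : agr u v = agr v u := by
  unfold agr; simp only [eq_comm]

lemma ball_card {k : ℕ} (v : Fin k → Bool) :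
    ((Finset.univ.filter fun u : Fin k → Bool => 3 * k < 4 * agr u v).card : ℝ)
      ≤ (97 / 54 : ℝ) ^ k := by
  have h1 : ∑ u : Fin k → Bool, ((81 / 16 : ℝ)) ^ (agr u v) = (97 / 16 : ℝ) ^ k := by
    have : ∀ u : Fin k → Bool, ((81 / 16 : ℝ)) ^ (agr u v)
        = ∏ i, (if u i = v i then (81 / 16 : ℝ) else 1) := by
      intro u
      rw [agr, Finset.prod_ite, Finset.prod_const, Finset.prod_const_one, mul_one]
    simp only [this]
    have h2 := Finset.prod_univ_sum (fun _ : Fin k => (Finset.univ : Finset Bool))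
      (fun i c => if c = v i then (81 / 16 : ℝ) else 1)
    rw [Fintype.piFinset_univ] at h2
    rw [← h2]
    have : ∀ i : Fin k, ∑ c : Bool, (if c = v i then (81 / 16 : ℝ) else 1) = 97 / 16 := by
      intro i
      rw [Fintype.sum_bool]
      cases v i <;> norm_num
    simp only [this]
    rw [Finset.prod_const, Finset.card_univ, Fintype.card_fin]
  have h2 : ((Finset.univ.filter fun u : Fin k → Bool => 3 * k < 4 * agr u v).card : ℝ)
      * (27 / 8 : ℝ) ^ k ≤ (97 / 16 : ℝ) ^ k := by
    rw [← h1, ← nsmul_eq_mul, ← Finset.sum_const]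
    refine (Finset.sum_le_sum ?_).trans (Finset.sum_le_sum_of_subset_of_nonneg
      (Finset.filter_subset _ _) (fun _ _ _ => by positivity))
    intro u hu
    have hu' := (Finset.mem_filter.1 hu).2
    have e1 : (27 / 8 : ℝ) = (3 / 2) ^ 3 := by norm_num
    have e2 : (81 / 16 : ℝ) = (3 / 2) ^ 4 := by norm_num
    rw [e1, e2, ← pow_mul, ← pow_mul]
    exact pow_le_pow_right₀ (by norm_num) hu'.le
  have h3 : (97 / 54 : ℝ) ^ k = (97 / 16 : ℝ) ^ k / (27 / 8 : ℝ) ^ k := by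
    rw [← div_pow]; norm_num
  rw [h3, le_div_iff₀ (by positivity)]
  exact h2

lemma exists_code (k : ℕ) : ∃ C : Finset (Fin k → Bool),
    (∀ u ∈ C, ∀ v ∈ C, u ≠ v → 4 * agr u v ≤ 3 * k) ∧ (108 / 97 : ℝ) ^ k ≤ C.card := by
  classical
  let P : Finset (Finset (Fin k → Bool)) := Finset.univ.filter fun C =>
    ∀ u ∈ C, ∀ v ∈ C, u ≠ v → 4 * agr u v ≤ 3 * k
  have hP : P.Nonempty := ⟨∅, by simp [P]⟩
  obtain ⟨C, hC, hmax⟩ := P.exists_max_image Finset.card hP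
  have hC' := (Finset.mem_filter.1 hC).2
  refine ⟨C, hC', ?_⟩
  have hself : ∀ u : Fin k → Bool, agr u u = k := by intro u; simp [agr]
  have hcov : (Finset.univ : Finset (Fin k → Bool)) ⊆
      C ∪ C.biUnion fun v => Finset.univ.filter fun u : Fin k → Bool => 3 * k < 4 * agr u v := by
    intro u _
    by_contra hu
    simp only [Finset.mem_union, Finset.mem_biUnion, Finset.mem_filter, Finset.mem_univ, true_and,
      not_or, not_exists, not_and, not_lt] at hu
    obtain ⟨huC, hu⟩ := hu
    have : insert u C ∈ P := by
      refine Finset.mem_filter.2 ⟨Finset.mem_univ _, ?_⟩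
      intro a ha b hb hab
      rcases Finset.mem_insert.1 ha with rfl | ha' <;> rcases Finset.mem_insert.1 hb with rfl | hb'
      · exact absurd rfl hab
      · exact hu _ hb'
      · rw [agr_comm']; exact hu _ ha'
      · exact hC' _ ha' _ hb' hab
    have := hmax _ this
    rw [Finset.card_insert_of_notMem huC] at this
    omega
  rcases Nat.eq_zero_or_pos k with rfl | hk
  · have : C.Nonempty := by
      by_contra h
      rw [Finset.not_nonempty_iff_eq_empty] at h
      subst h
      have := hcov (Finset.mem_univ (fun _ => true))
      simp at this
    have := this.card_pos
    simp only [pow_zero]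
    exact_mod_cast this
  have hcov2 : (Finset.univ : Finset (Fin k → Bool)) ⊆
      C.biUnion fun v => Finset.univ.filter fun u : Fin k → Bool => 3 * k < 4 * agr u v := by
    intro u hu
    rcases Finset.mem_union.1 (hcov hu) with h | h
    · refine Finset.mem_biUnion.2 ⟨u, h, ?_⟩
      simp [hself]; omega
    · exact h
  have h1 := (Finset.card_le_card hcov2).trans Finset.card_biUnion_le
  have h2 : ((2 : ℝ)) ^ k ≤ C.card * (97 / 54 : ℝ) ^ k := by
    have h3 : ((Finset.univ : Finset (Fin k → Bool)).card : ℝ) = 2 ^ k := by simp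
    rw [← h3]
    calc ((Finset.univ : Finset (Fin k → Bool)).card : ℝ) ≤ ((∑ v ∈ C, (Finset.univ.filter
            fun u : Fin k → Bool => 3 * k < 4 * agr u v).card : ℕ) : ℝ) := by
          exact_mod_cast h1
      _ ≤ ∑ v ∈ C, (97 / 54 : ℝ) ^ k := by
          push_cast
          exact Finset.sum_le_sum fun v _ => ball_card v
      _ = _ := by simp
  have h3 : (108 / 97 : ℝ) ^ k = 2 ^ k / (97 / 54 : ℝ) ^ k := by
    rw [← div_pow]; norm_num
  rw [h3, div_le_iff₀ (by positivity)]
  exact h2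

lemma sq_eq_one_iff_norm' {a : ℝ} (h : 0 ≤ a) : a ^ 2 = 1 ↔ a = 1 := by
  constructor
  · intro h2; nlinarith
  · rintro rfl; norm_num

/-- sign -/
noncomputable def sgb (b : Bool) : ℝ := if b then 1 else -1

lemma exists_points (n : ℕ) (hn : 3 ≤ n) : ∃ (ι : Type) (_ : Fintype ι)
    (x : ι → EuclideanSpace ℝ (Fin n)),
    (∀ i, ‖x i‖ = 1) ∧ (∀ i, ⟪x i, e₁ n hn⟫ = 0) ∧ (∀ i j, i ≠ j → ⟪x i, x j⟫ ≤ 1 / 2) ∧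
    Real.exp (n / 128) / 96 ≤ Fintype.card ι ∧ (1 : ℝ) ≤ Fintype.card ι := by
  obtain ⟨k, rfl⟩ : ∃ k, n = k + 1 := ⟨n - 1, by omega⟩
  have hk : (0 : ℝ) < k := by exact_mod_cast (by omega : 0 < k)
  obtain ⟨C, hC, hcard⟩ := exists_code k
  let x : (Fin k → Bool) → EuclideanSpace ℝ (Fin (k + 1)) := fun v =>
    WithLp.toLp 2 (Fin.cons 0 (fun i => sgb (v i) / √k))
  have hin : ∀ u v, ⟪x u, x v⟫ = (2 * (agr u v : ℝ) - k) / k := by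
    intro u v
    simp only [x, PiLp.inner_apply, Fin.sum_univ_succ, Fin.cons_zero, Fin.cons_succ]
    have : ∀ i, inner ℝ (sgb (u i) / √k) (sgb (v i) / √k)
        = (2 * (if u i = v i then 1 else 0) - 1) / (k : ℝ) := by
      intro i
      have hs : √(k : ℝ) * √k = k := Real.mul_self_sqrt hk.le
      have : inner ℝ (sgb (u i) / √k) (sgb (v i) / √k) = (sgb (u i) * sgb (v i)) / (√k * √k) := by
        simp only [RCLike.inner_apply, conj_trivial]
        field_simp
      rw [this, hs]
      cases u i <;> cases v i <;> norm_num [sgb]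
    simp only [this]
    rw [← Finset.sum_div, Finset.sum_sub_distrib, ← Finset.mul_sum]
    simp [agr]
  refine ⟨C, inferInstance, fun v => x v.1, ?_, ?_, ?_, ?_, ?_⟩
  · intro v
    have h := hin v.1 v.1
    have : agr v.1 v.1 = k := by simp [agr]
    rw [this, real_inner_self_eq_norm_sq] at h
    have h' : ‖x v.1‖ ^ 2 = 1 := by rw [h]; field_simp; ring
    exact (sq_eq_one_iff_norm' (norm_nonneg (x v.1))).1 h'
  · intro v
    simp [e₁, x, EuclideanSpace.inner_single_right]
  · intro u v huv
    rw [hin]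
    have := hC u.1 u.2 v.1 v.2 (fun h => huv (Subtype.ext h))
    have h2 : (4 : ℝ) * agr u.1 v.1 ≤ 3 * k := by exact_mod_cast this
    rw [div_le_iff₀ hk]; linarith
  · rw [Fintype.card_coe]
    refine le_trans ?_ hcard
    have e1 : Real.exp (1 / 128) ≤ 108 / 97 := by
      have := Real.add_one_le_exp (-(1 / 128 : ℝ))
      have h3 : Real.exp (1 / 128) * Real.exp (-(1 / 128)) = 1 := by
        rw [← Real.exp_add]; simp
      nlinarith [Real.exp_pos (1 / 128)]
    have e2 : Real.exp (((k + 1 : ℕ) : ℝ) / 128) = Real.exp (1 / 128) ^ k * Real.exp (1 / 128) := by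
      rw [← Real.exp_nat_mul, ← Real.exp_add]; congr 1; push_cast; ring
    rw [e2, div_le_iff₀ (by norm_num)]
    gcongr
    linarith
  · rw [Fintype.card_coe]
    exact le_trans (one_le_pow₀ (by norm_num)) hcard

/-- Geometry: SVM errs. -/
lemma svm_err (n : ℕ) (hn : 3 ≤ n)
    (A : Multiset (HalfSphere n hn × Bool) → HalfSphere n hn → Bool)
    (hSVM : ∀ S : Multiset (HalfSphere n hn × Bool),
      (∃ p ∈ S, p.2 = true) → (∃ p ∈ S, p.2 = false) →
      (∃ (w : EuclideanSpace ℝ (Fin n)) (b : ℝ), w ≠ 0 ∧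
        ∀ p ∈ S, p.2 = decide (0 ≤ ⟪w, p.1.1⟫ + b)) →
      ∃ (w : EuclideanSpace ℝ (Fin n)) (b : ℝ), w ≠ 0 ∧
        A S = (fun x => decide (0 ≤ ⟪w, x.1⟫ + b)) ∧
        (∀ p ∈ S, p.2 = decide (0 ≤ ⟪w, p.1.1⟫ + b)) ∧
        ∀ (w' : EuclideanSpace ℝ (Fin n)) (b' : ℝ), w' ≠ 0 →
          (∀ p ∈ S, p.2 = decide (0 ≤ ⟪w', p.1.1⟫ + b')) →
          (⨅ p : {p // p ∈ S}, |⟪w', p.1.1.1⟫ + b'| / ‖w'‖) ≤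
            ⨅ p : {p // p ∈ S}, |⟪w, p.1.1.1⟫ + b| / ‖w‖)
    (y : Bool) (x x' : HalfSphere n hn) (hx' : ‖x'.1‖ = 1) (hd : ‖x.1 - x'.1‖ < 21 / 82)
    (S : Multiset (HalfSphere n hn × Bool)) (hS : ∃ p, p ∈ S)
    (hSy : ∀ p ∈ S, p.2 = y ∧ ⟪x'.1, p.1.1⟫ ≤ 20 / 41) :
    A (S + {(x', !y)}) x = !y := by
  have hmem : (x', !y) ∈ S + {(x', !y)} := by simp
  have hself : ⟪x'.1, x'.1⟫ = 1 := by rw [real_inner_self_eq_norm_sq, hx']; norm_num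
  have hx0 : x'.1 ≠ 0 := by intro h; rw [h] at hx'; simp at hx'
  -- candidate
  have hcand : ∃ (w' : EuclideanSpace ℝ (Fin n)) (b' : ℝ), w' ≠ 0 ∧
      (∀ p ∈ S + {(x', !y)}, p.2 = decide (0 ≤ ⟪w', p.1.1⟫ + b')) ∧
      ∀ p ∈ S + {(x', !y)}, 21 / 82 ≤ |⟪w', p.1.1⟫ + b'| / ‖w'‖ := by
    refine ⟨(-sgb y) • x'.1, sgb y * (61 / 82), ?_, ?_, ?_⟩
    · refine smul_ne_zero ?_ hx0
      cases y <;> norm_num [sgb]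
    · intro p hp
      rw [inner_smul_left]
      rcases Multiset.mem_add.1 hp with hp | hp
      · obtain ⟨h1, h2⟩ := hSy p hp
        rw [h1]
        cases y
        · symm; simp [sgb]; linarith
        · symm; simp [sgb]; linarith
      · rw [Multiset.mem_singleton] at hp
        subst hp
        simp only [hself]
        cases y <;> norm_num [sgb]
    · intro p hp
      have hnorm : ‖(-sgb y) • x'.1‖ = 1 := by
        rw [norm_smul, hx']; cases y <;> norm_num [sgb]
      rw [hnorm, div_one, inner_smul_left]
      rcases Multiset.mem_add.1 hp with hp | hp
      · obtain ⟨h1, h2⟩ := hSy p hp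
        cases y
        · simp [sgb]; rw [le_abs]; right; linarith
        · simp [sgb]; rw [le_abs]; left; linarith
      · rw [Multiset.mem_singleton] at hp
        subst hp
        simp only [hself]
        cases y <;> norm_num [sgb, abs_of_pos, abs_of_neg]
  obtain ⟨w', b', hw', hc', hm'⟩ := hcand
  obtain ⟨q, hq⟩ := hS
  have hq' : q ∈ S + {(x', !y)} := Multiset.mem_add.2 (Or.inl hq)
  have hboth : ∀ c : Bool, ∃ p ∈ S + {(x', !y)}, p.2 = c := by
    intro c
    by_cases h : c = y
    · exact ⟨q, hq', by rw [(hSy q hq).1, h]⟩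
    · refine ⟨_, hmem, ?_⟩
      show (!y) = c
      clear * - h
      revert h
      cases c <;> cases y <;> decide
  obtain ⟨w, b, hw, hA, hc, hmax⟩ := hSVM _ (hboth true) (hboth false) ⟨w', b', hw', hc'⟩
  have hle := hmax w' b' hw' hc'
  haveI : Nonempty {p // p ∈ S + {(x', !y)}} := ⟨⟨_, hmem⟩⟩
  have h1 : 21 / 82 ≤ ⨅ p : {p // p ∈ S + {(x', !y)}}, |⟪w', p.1.1.1⟫ + b'| / ‖w'‖ :=
    le_ciInf fun p => hm' p.1 p.2
  have h2 : (⨅ p : {p // p ∈ S + {(x', !y)}}, |⟪w, p.1.1.1⟫ + b| / ‖w‖)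
      ≤ |⟪w, x'.1⟫ + b| / ‖w‖ :=
    ciInf_le (f := fun p : {p // p ∈ S + {(x', !y)}} => |⟪w, p.1.1.1⟫ + b| / ‖w‖)
      ⟨0, by rintro _ ⟨p, rfl⟩; positivity⟩ ⟨_, hmem⟩
  have hwn : 0 < ‖w‖ := norm_pos_iff.2 hw
  have h3 : 21 / 82 * ‖w‖ ≤ |⟪w, x'.1⟫ + b| := by
    rw [← le_div_iff₀ hwn]; linarith
  have h4 : |⟪w, x.1⟫ - ⟪w, x'.1⟫| < 21 / 82 * ‖w‖ := by
    rw [← inner_sub_right]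
    refine (abs_real_inner_le_norm _ _).trans_lt ?_
    nlinarith
  have h5 := hc _ hmem
  simp only at h5
  rw [hA, h5]
  rw [abs_lt] at h4
  rcases le_or_gt 0 (⟪w, x'.1⟫ + b) with h | h
  · rw [abs_of_nonneg h] at h3
    rw [decide_eq_true h]
    simp only [decide_eq_true_eq]
    linarith
  · rw [abs_of_neg h] at h3
    rw [decide_eq_false (not_le.2 h)]
    simp only [decide_eq_false_iff_not, not_le]
    linarith

lemma pow_bound (u : ℝ) (h0 : 0 < u) (h1 : u ≤ 1 / 2) (m : ℕ) (hm : m * u < 1) :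
    1 / 8 < (1 - u) ^ m := by
  have h2 : Real.exp (-2 * u) ≤ 1 - u := by
    have := Real.add_one_le_exp (2 * u)
    have h3 : Real.exp (2 * u) * Real.exp (-2 * u) = 1 := by
      rw [← Real.exp_add]; simp
    have : Real.exp (-2 * u) * (1 + 2 * u) ≤ 1 := by
      nlinarith [Real.exp_pos (-2 * u)]
    have h4 : 1 ≤ (1 - u) * (1 + 2 * u) := by nlinarith
    exact le_of_mul_le_mul_right (this.trans h4) (by linarith)
  have h3 : Real.exp (-2) < (1 - u) ^ m := by
    refine lt_of_lt_of_le ?_ (pow_le_pow_left₀ (Real.exp_pos _).le h2 m)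
    rw [← Real.exp_nat_mul]
    apply Real.exp_lt_exp.2
    linarith
  refine lt_trans ?_ h3
  have h4 : Real.exp 2 < 8 := by
    have : Real.exp 2 = Real.exp 1 * Real.exp 1 := by rw [← Real.exp_add]; norm_num
    rw [this]
    nlinarith [Real.exp_one_lt_d9, Real.exp_pos 1]
  have h5 : Real.exp 2 * Real.exp (-2) = 1 := by
    rw [← Real.exp_add]; simp
  nlinarith [Real.exp_pos (-2)]

/-- Any hard-margin SVM needs `max(e^{n/128}/(768ε), 1/(8ε))` samples to get `1`-point
attackable rate `ε` for linear classifiers with margin `1/8`. -/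
theorem stmt6 (n : ℕ) (hn : 3 ≤ n)
    (A : Multiset (HalfSphere n hn × Bool) → HalfSphere n hn → Bool)
    (hSVM : ∀ S : Multiset (HalfSphere n hn × Bool),
      (∃ p ∈ S, p.2 = true) → (∃ p ∈ S, p.2 = false) →
      (∃ (w : EuclideanSpace ℝ (Fin n)) (b : ℝ), w ≠ 0 ∧
        ∀ p ∈ S, p.2 = decide (0 ≤ ⟪w, p.1.1⟫ + b)) →
      ∃ (w : EuclideanSpace ℝ (Fin n)) (b : ℝ), w ≠ 0 ∧
        A S = (fun x => decide (0 ≤ ⟪w, x.1⟫ + b)) ∧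
        (∀ p ∈ S, p.2 = decide (0 ≤ ⟪w, p.1.1⟫ + b)) ∧
        ∀ (w' : EuclideanSpace ℝ (Fin n)) (b' : ℝ), w' ≠ 0 →
          (∀ p ∈ S, p.2 = decide (0 ≤ ⟪w', p.1.1⟫ + b')) →
          (⨅ p : {p // p ∈ S}, |⟪w', p.1.1.1⟫ + b'| / ‖w'‖) ≤
            ⨅ p : {p // p ∈ S}, |⟪w, p.1.1.1⟫ + b| / ‖w‖) :
    ∀ ε : ℝ, 0 < ε → ε < 1 / 16 →
    ∃ (w : EuclideanSpace ℝ (Fin n)) (b : ℝ), w ≠ 0 ∧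
    ∃ D : Measure (HalfSphere n hn × Bool), IsProbabilityMeasure D ∧
      D {p : HalfSphere n hn × Bool | p.2 = decide (0 ≤ ⟪w, p.1.1⟫ + b)} = 1 ∧
      (∀ p ∈ msupport D,
        (1 / 8 : ℝ) * ‖w‖ / 2 ≤ (if p.2 then (1 : ℝ) else -1) * (⟪w, p.1.1⟫ + b)) ∧
      ∀ m : ℕ, (m : ℝ) < max (Real.exp (n / 128) / (768 * ε)) (1 / (8 * ε)) →
        ENNReal.ofReal ε <
          ∫⁻ f, atkDetT 1 D (fun x => decide (0 ≤ ⟪w, x.1⟫ + b)) (toTrain f) A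
            ∂(samples D m) := by
  classical
  intro ε hε hε'
  obtain ⟨ι, _, x, hx1, hxe, hxx, hN1, hN2⟩ := exists_points n hn
  set N : ℝ := (Fintype.card ι : ℝ) with hN
  have hN0 : 0 < N := by linarith
  have he : ‖e₁ n hn‖ = 1 := by simp [e₁]
  have hee : ⟪e₁ n hn, e₁ n hn⟫ = (1 : ℝ) := by rw [real_inner_self_eq_norm_sq, he]; norm_num
  have hex : ∀ i, ⟪e₁ n hn, x i⟫ = (0 : ℝ) := fun i => by rw [real_inner_comm]; exact hxe i
  have hxs : ∀ i, ⟪x i, x i⟫ = (1 : ℝ) := fun i => by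
    rw [real_inner_self_eq_norm_sq, hx1]; norm_num
  let p0 : HalfSphere n hn := ⟨-(e₁ n hn), Or.inr rfl⟩
  let X : ι → HalfSphere n hn := fun i => ⟨x i, Or.inl ⟨hx1 i, (hxe i).ge⟩⟩
  let t : ι → EuclideanSpace ℝ (Fin n) := fun i => (40 / 41 : ℝ) • x i + (9 / 41 : ℝ) • e₁ n hn
  have hte : ∀ i, ⟪t i, e₁ n hn⟫ = (9 / 41 : ℝ) := by
    intro i
    simp only [t, inner_add_left, inner_smul_left, hxe, hee, conj_trivial]; norm_num
  have het : ∀ i, ⟪e₁ n hn, t i⟫ = (9 / 41 : ℝ) := fun i => by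
    rw [real_inner_comm]; exact hte i
  have htx : ∀ i j, ⟪t i, x j⟫ = (40 / 41 : ℝ) * ⟪x i, x j⟫ := by
    intro i j
    simp only [t, inner_add_left, inner_smul_left, hex, conj_trivial]; norm_num
  have htn : ∀ i, ‖t i‖ = 1 := by
    intro i
    have : ‖t i‖ ^ 2 = 1 := by
      rw [← real_inner_self_eq_norm_sq]
      nth_rewrite 2 [show t i = (40 / 41 : ℝ) • x i + (9 / 41 : ℝ) • e₁ n hn from rfl]
      rw [inner_add_right, inner_smul_right, inner_smul_right, htx, hte, hxs]
      norm_num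
    exact (sq_eq_one_iff_norm' (norm_nonneg (t i))).1 this
  have htd : ∀ i, ‖x i - t i‖ < 21 / 82 := by
    intro i
    have h1 : ‖x i - t i‖ ^ 2 = 2 / 41 := by
      rw [norm_sub_sq_real, hx1, htn, real_inner_comm, htx, hxs]; norm_num
    nlinarith [norm_nonneg (x i - t i)]
  let X' : ι → HalfSphere n hn := fun i => ⟨t i, Or.inl ⟨htn i, by rw [hte]; norm_num⟩⟩
  have hXinj : Function.Injective X := by
    intro i j hij
    by_contra hne
    have h1 := hxx i j hne
    have h2 : x i = x j := congrArg Subtype.val hij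
    rw [h2, hxs] at h1
    norm_num at h1
  let y : Bool := !(A 0 p0)
  have hy : A 0 p0 ≠ y := by simp [y]
  clear_value y
  let w : EuclideanSpace ℝ (Fin n) := (-sgb y) • e₁ n hn
  let b : ℝ := sgb y / 16
  have hval : ∀ z : EuclideanSpace ℝ (Fin n),
      ⟪w, z⟫ + b = sgb y * (1 / 16 - ⟪e₁ n hn, z⟫) := by
    intro z
    simp only [w, b, inner_smul_left, conj_trivial]; ring
  have hwn : ‖w‖ = 1 := by
    simp only [w, norm_smul, he]; cases y <;> norm_num [sgb]
  let h : HalfSphere n hn → Bool := fun x => decide (0 ≤ ⟪w, x.1⟫ + b)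
  have hp0 : ⟪e₁ n hn, p0.1⟫ = (-1 : ℝ) := by simp only [p0, inner_neg_right, hee]
  have hh0 : h p0 = y := by
    simp only [h, hval, hp0]; cases y <;> norm_num [sgb]
  have hhX : ∀ i, h (X i) = y := by
    intro i
    simp only [h, hval, X, hex]; cases y <;> norm_num [sgb]
  have hhX' : ∀ i, h (X' i) = !y := by
    intro i
    simp only [h, hval, X', het]; cases y <;> norm_num [sgb]
  let δ : ℝ := 8 * ε
  have hδ : δ = 8 * ε := rfl
  let D : Measure (HalfSphere n hn × Bool) :=
    ENNReal.ofReal (1 - δ) • Measure.dirac (p0, y) +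
      ∑ i : ι, ENNReal.ofReal (δ / N) • Measure.dirac (X i, y)
  have hDapp : ∀ s, D s = ENNReal.ofReal (1 - δ) * Measure.dirac (p0, y) s +
      ∑ i : ι, ENNReal.ofReal (δ / N) * Measure.dirac (X i, y) s := by
    intro s
    simp [D, Measure.finsetSum_apply]
  have hδN : 0 < δ / N := by positivity
  have hD1 : ∀ s, (p0, y) ∈ s → (∀ i, (X i, y) ∈ s) → D s = 1 := by
    intro s h0 hX
    rw [hDapp, Measure.dirac_apply_of_mem h0]
    simp only [Measure.dirac_apply_of_mem (hX _), mul_one, Finset.sum_const, Finset.card_univ]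
    rw [← ENNReal.ofReal_nsmul, ← ENNReal.ofReal_add (by linarith) (by positivity)]
    rw [nsmul_eq_mul, mul_div_cancel₀ _ hN0.ne']
    simp
  have hprob : IsProbabilityMeasure D := ⟨hD1 _ (Set.mem_univ _) fun _ => Set.mem_univ _⟩
  refine ⟨w, b, fun hw => by rw [hw] at hwn; simp at hwn, D, hprob, ?_, ?_, ?_⟩
  · exact hD1 _ hh0.symm fun i => (hhX i).symm
  · intro p hp
    let T : Set (HalfSphere n hn × Bool) := insert (p0, y) (Set.range fun i => (X i, y))
    have hTf : T.Finite := (Set.finite_range _).insert _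
    have hTD : D T = 1 := hD1 _ (Set.mem_insert _ _) fun i => Set.mem_insert_of_mem _ ⟨i, rfl⟩
    have hpT : p ∈ T := by
      by_contra hpT
      have h1 := hp Tᶜ hTf.isClosed.isOpen_compl hpT
      rw [(prob_compl_eq_zero_iff hTf.measurableSet).2 hTD] at h1
      exact lt_irrefl _ h1
    rw [hwn, hval]
    rcases hpT with rfl | ⟨i, rfl⟩
    · simp only [hp0]; cases y <;> norm_num [sgb]
    · simp only [X, hex]; cases y <;> norm_num [sgb]
  · intro m hm
    have hmu : (m : ℝ) * (δ / N) < 1 := by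
      have h1 : (m : ℝ) * δ < max (Real.exp (n / 128) / 96) 1 := by
        rcases lt_max_iff.1 hm with h | h
        · refine lt_max_of_lt_left ?_
          rw [lt_div_iff₀ (by positivity)] at h ⊢
          rw [hδ]; linarith
        · refine lt_max_of_lt_right ?_
          rw [lt_div_iff₀ (by positivity)] at h
          rw [hδ]; linarith
      rw [← mul_div_assoc, div_lt_one hN0]
      exact h1.trans_le (max_le hN1 hN2)
    rcases Nat.eq_zero_or_pos m with rfl | hmpos
    · have hlow : ∀ f : Fin 0 → HalfSphere n hn × Bool,
          ENNReal.ofReal (1 - δ) ≤ atkDetT 1 D h (toTrain f) A := by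
        intro f
        refine le_iSup_of_le ⟨fun _ => 0, fun _ => by simp⟩ ?_
        rw [hDapp]
        refine le_add_right ?_
        rw [Measure.dirac_apply_of_mem]
        · simp
        · simp only [Set.mem_ofPred_eq, hh0]
          simpa [toTrain] using hy
      haveI : IsProbabilityMeasure (samples D 0) := by unfold samples; infer_instance
      calc ENNReal.ofReal ε < ENNReal.ofReal (1 - δ) :=
            (ENNReal.ofReal_lt_ofReal_iff (by linarith)).2 (by linarith)
        _ = ∫⁻ f, ENNReal.ofReal (1 - δ) ∂(samples D 0) := by simp
        _ ≤ _ := lintegral_mono hlow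
    let B : ι → Set (HalfSphere n hn × Bool) := fun i =>
      insert (p0, y) ((fun j => (X j, y)) '' {j | j ≠ i})
    have hBf : ∀ i, (B i).Finite := fun i => ((Set.toFinite _).image _).insert _
    have hBD : ∀ i, ENNReal.ofReal (1 - δ / N) ≤ D (B i) := by
      intro i
      rw [hDapp, Measure.dirac_apply_of_mem (Set.mem_insert _ _)]
      have h1 : ∑ j ∈ Finset.univ.erase i, ENNReal.ofReal (δ / N) ≤
          ∑ j : ι, ENNReal.ofReal (δ / N) * Measure.dirac (X j, y) (B i) := by
        refine le_trans (Finset.sum_le_sum ?_)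
          (Finset.sum_le_sum_of_subset (Finset.erase_subset i Finset.univ))
        intro j hj
        rw [Measure.dirac_apply_of_mem, mul_one]
        exact Set.mem_insert_of_mem _ ⟨j, (Finset.mem_erase.1 hj).1, rfl⟩
      refine le_trans ?_ (add_le_add_right h1 _)
      rw [Finset.sum_const, ← ENNReal.ofReal_nsmul, mul_one,
        ← ENNReal.ofReal_add (by linarith) (by positivity)]
      apply ENNReal.ofReal_le_ofReal
      rw [Finset.card_erase_of_mem (Finset.mem_univ _), nsmul_eq_mul, Finset.card_univ,
        Nat.cast_sub (by rw [hN] at hN2; exact_mod_cast hN2), ← hN, sub_mul, mul_div_cancel₀ _ hN0.ne']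
      push_cast
      linarith
    let P : ι → Set (Fin m → HalfSphere n hn × Bool) := fun i => Set.univ.pi fun _ => B i
    have hPm : ∀ i, MeasurableSet (P i) := fun i =>
      MeasurableSet.univ_pi fun _ => (hBf i).measurableSet
    have hPD : ∀ i, ENNReal.ofReal ((1 - δ / N) ^ m) ≤ samples D m (P i) := by
      intro i
      have hle1 : 0 ≤ 1 - δ / N := by
        have : δ / N ≤ δ := div_le_self (by positivity) hN2
        linarith
      simp only [samples, P]
      rw [Measure.pi_pi, Finset.prod_const, Finset.card_univ, Fintype.card_fin,
        ENNReal.ofReal_pow hle1]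
      gcongr
      exact hBD i
    let Adv : HalfSphere n hn → Multiset (HalfSphere n hn × Bool) := fun z =>
      if hz : ∃ j, X j = z then {(X' hz.choose, !y)} else 0
    have hAdv : ∀ i, Adv (X i) = {(X' i, !y)} := by
      intro i
      have hz : ∃ j, X j = X i := ⟨i, rfl⟩
      simp only [Adv]
      rw [dif_pos hz, hXinj hz.choose_spec]
    have hAdvOK : ∀ z, (∀ p ∈ Adv z, p.2 = h p.1) ∧ (Adv z).card ≤ 1 := by
      intro z
      by_cases hz : ∃ j, X j = z
      · obtain ⟨j, rfl⟩ := hz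
        rw [hAdv]
        simp [hhX']
      · simp only [Adv]
        rw [dif_neg hz]
        simp
    have hlow : ∀ f : Fin m → HalfSphere n hn × Bool,
        ∑ i : ι, (P i).indicator (fun _ => ENNReal.ofReal (δ / N)) f
          ≤ atkDetT 1 D h (toTrain f) A := by
      intro f
      refine le_iSup_of_le ⟨Adv, hAdvOK⟩ ?_
      rw [hDapp]
      refine le_add_left (Finset.sum_le_sum fun i _ => ?_)
      by_cases hf : f ∈ P i
      · rw [Set.indicator_of_mem hf, Measure.dirac_apply_of_mem, mul_one]
        simp only [Set.mem_ofPred_eq, hAdv, hhX]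
        rw [svm_err n hn A hSVM y (X i) (X' i) (htn i) (htd i) (toTrain f)]
        · cases y <;> simp
        · exact ⟨f ⟨0, hmpos⟩, by simp [toTrain, List.mem_ofFn]⟩
        · intro p hp
          have hp' : ∃ k, f k = p := by simpa [toTrain, List.mem_ofFn] using hp
          obtain ⟨k, rfl⟩ := hp'
          rcases hf k (Set.mem_univ _) with hk | ⟨j, hj, hk⟩
          · rw [hk]
            refine ⟨rfl, ?_⟩
            simp only [p0, X', inner_neg_right, hte]; norm_num
          · rw [← hk]
            refine ⟨rfl, ?_⟩
            simp only [X, X', htx]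
            have := hxx i j (Ne.symm hj)
            linarith
      · rw [Set.indicator_of_notMem hf]; exact zero_le
    have hu2 : δ / N ≤ 1 / 2 := by
      have : δ / N ≤ δ := div_le_self (by positivity) hN2
      linarith
    have hpow := pow_bound (δ / N) hδN hu2 m hmu
    calc ENNReal.ofReal ε < ENNReal.ofReal (δ * (1 - δ / N) ^ m) := by
          refine (ENNReal.ofReal_lt_ofReal_iff (by positivity)).2 ?_
          nlinarith
      _ = ∑ i : ι, ENNReal.ofReal (δ / N) * ENNReal.ofReal ((1 - δ / N) ^ m) := by
          rw [← ENNReal.ofReal_mul hδN.le, Finset.sum_const, ← ENNReal.ofReal_nsmul,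
            Finset.card_univ, nsmul_eq_mul, ← mul_assoc, mul_div_cancel₀ _ hN0.ne']
      _ ≤ ∑ i : ι, ENNReal.ofReal (δ / N) * samples D m (P i) := by
          gcongr with i
          exact hPD i
      _ = ∫⁻ f, ∑ i : ι, (P i).indicator (fun _ => ENNReal.ofReal (δ / N)) f ∂(samples D m) := by
          rw [lintegral_finsetSum _ fun i _ => measurable_const.indicator (hPm i)]
          refine Finset.sum_congr rfl fun i _ => ?_
          rw [lintegral_indicator_const (hPm i)]
      _ ≤ _ := lintegral_mono hlow
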